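/- arXiv:1909.10571 — 4 statements merged into one kernel-verified Lean document; each statement's English description precedes it below -/
import Mathlib

section
/- Let a, b ∈ ℂ be ℝ-linearly independent and let G be the subgroup of (ℂ, +) generated over ℤ by a and b. Then G admits a geometric basis: there exist a', b' ∈ G that are ℝ-linearly independent, generate G over ℤ, and satisfy |a'| ≤ |n·a' + m·b'| for all integers (n, m) ≠ (0, 0) and |b'| ≤ |n·a' + m·b'| for all integers n, m with m ≠ 0. -/
open UpperHalfPlane in
theorem geom_aux_red (τ : ℂ) (h : 0 < τ.im) :
    ∃ p q r s : ℤ, p * s - q * r = 1 ∧ ∃ t : ℂ, 0 < t.im ∧ (r * τ + s : ℂ) ≠ 0 ∧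
      t = (p * τ + q) / (r * τ + s) ∧ 1 ≤ Complex.normSq t ∧ |t.re| ≤ 1 / 2 := by
  obtain ⟨g, hg⟩ := ModularGroup.exists_smul_mem_fd (⟨τ, h⟩ : ℍ)
  refine ⟨g 0 0, g 0 1, g 1 0, g 1 1, ?_, ((g • (⟨τ, h⟩ : ℍ) : ℍ) : ℂ), ?_, ?_, ?_, hg.1, hg.2⟩
  · have := g.det_coe
    rwa [Matrix.det_fin_two] at this
  · exact (g • (⟨τ, h⟩ : ℍ)).im_pos
  · intro h0
    have hdet := g.det_coe
    rw [Matrix.det_fin_two] at hdet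
    have h1 := congrArg Complex.im h0
    have h2 := congrArg Complex.re h0
    simp at h1 h2
    rcases h1 with h1 | h1
    · rw [h1] at h2
      simp at h2
      rw [h1, h2] at hdet
      simp at hdet
    · exact h.ne' h1
  · rw [UpperHalfPlane.specialLinearGroup_apply]
    simp

theorem geom_aux_ineq (t : ℂ) (h1 : 1 ≤ Complex.normSq t) (h2 : |t.re| ≤ 1 / 2) (n m : ℤ) :
    (m ≠ 0 → ‖t‖ ≤ ‖(n : ℂ) + m * t‖) ∧ ((n, m) ≠ (0, 0) → 1 ≤ ‖(n : ℂ) + m * t‖) := by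
  have key : Complex.normSq ((n : ℂ) + m * t) =
      n ^ 2 + 2 * n * m * t.re + m ^ 2 * Complex.normSq t := by
    simp [Complex.normSq_apply]; ring
  have hb : -(|(n : ℝ) * m|) ≤ 2 * n * m * t.re := by
    have h3 : |2 * n * m * t.re| ≤ |(n : ℝ) * m| := by
      rw [show 2 * (n : ℝ) * m * t.re = (n * m) * (2 * t.re) by ring, abs_mul ((n : ℝ) * m)]
      apply mul_le_of_le_one_right (abs_nonneg _)
      rw [abs_mul, abs_two]; linarith
    linarith [neg_abs_le (2 * n * m * t.re)]
  have hint : (n, m) ≠ (0, 0) → (1 : ℝ) ≤ n ^ 2 - |(n : ℝ) * m| + m ^ 2 := by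
    intro h
    have : (1 : ℤ) ≤ n ^ 2 - |n * m| + m ^ 2 := by
      have hor : n ≠ 0 ∨ m ≠ 0 := by
        by_contra hc
        push Not at hc
        exact h (by simp [hc.1, hc.2])
      have : (0 : ℤ) < n ^ 2 - |n * m| + m ^ 2 := by
        have hs : 0 < n ^ 2 + m ^ 2 := by
          rcases hor with h | h <;> positivity
        rcases abs_cases (n * m) with ⟨h, _⟩ | ⟨h, _⟩ <;> rw [h] <;>
          nlinarith [sq_nonneg (n - m), sq_nonneg (n + m)]
      omega
    exact_mod_cast this
  have hA : m ≠ 0 → Complex.normSq t ≤ Complex.normSq ((n : ℂ) + m * t) := by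
    intro hm
    have := hint (by simp [hm])
    have hm2 : (1 : ℝ) ≤ m ^ 2 := by
      have : (1 : ℤ) ≤ m ^ 2 := by have : 0 < m ^ 2 := by positivity
                                   omega
      exact_mod_cast this
    rw [key]; nlinarith [mul_nonneg (sub_nonneg.2 hm2) (sub_nonneg.2 h1)]
  have hB : (n, m) ≠ (0, 0) → 1 ≤ Complex.normSq ((n : ℂ) + m * t) := by
    intro h
    have := hint h
    rw [key]; nlinarith [mul_nonneg (sq_nonneg (m : ℝ)) (sub_nonneg.2 h1)]
  simp only [Complex.normSq_eq_norm_sq] at hA hB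
  refine ⟨fun h => ?_, fun h => ?_⟩
  · exact le_of_sq_le_sq (hA h) (norm_nonneg _)
  · have := hB h
    exact (one_le_sq_iff₀ (norm_nonneg _)).1 this

theorem geom_aux_main (a b : ℂ) (ha : a ≠ 0) (hab : 0 < (b / a).im) :
    ∃ a' b' : ℂ,
      a' ∈ AddSubgroup.closure ({a, b} : Set ℂ) ∧
      b' ∈ AddSubgroup.closure ({a, b} : Set ℂ) ∧
      LinearIndependent ℝ ![a', b'] ∧
      AddSubgroup.closure ({a', b'} : Set ℂ) = AddSubgroup.closure ({a, b} : Set ℂ) ∧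
      (∀ n m : ℤ, (n, m) ≠ (0, 0) →
        ‖a'‖ ≤ ‖n • a' + m • b'‖) ∧
      (∀ n m : ℤ, m ≠ 0 →
        ‖b'‖ ≤ ‖n • a' + m • b'‖) := by
  obtain ⟨p, q, r, s, hdet, t, ht, hne, hteq, h1, h2⟩ := geom_aux_red _ hab
  have hdetC : (p * s - q * r : ℂ) = 1 := by exact_mod_cast hdet
  obtain ⟨a', ha'⟩ : ∃ a' : ℂ, a' = s * a + r * b := ⟨_, rfl⟩
  obtain ⟨b', hb'⟩ : ∃ b' : ℂ, b' = q * a + p * b := ⟨_, rfl⟩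
  have ea : a' = a * (r * (b / a) + s) := by rw [ha']; field_simp; ring
  have ha0 : a' ≠ 0 := by rw [ea]; exact mul_ne_zero ha hne
  have eb : b' = a' * t := by
    rw [hteq, ea, mul_assoc, mul_div_cancel₀ _ hne, hb']; field_simp; ring
  have ma : a' ∈ AddSubgroup.closure ({a, b} : Set ℂ) :=
    AddSubgroup.mem_closure_pair.2 ⟨s, r, by simp [ha']⟩
  have mb : b' ∈ AddSubgroup.closure ({a, b} : Set ℂ) :=
    AddSubgroup.mem_closure_pair.2 ⟨q, p, by simp [hb']⟩
  have ma' : a ∈ AddSubgroup.closure ({a', b'} : Set ℂ) :=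
    AddSubgroup.mem_closure_pair.2 ⟨p, -r, by
      simp [ha', hb']; linear_combination a * hdetC⟩
  have mb' : b ∈ AddSubgroup.closure ({a', b'} : Set ℂ) :=
    AddSubgroup.mem_closure_pair.2 ⟨-q, s, by
      simp [ha', hb']; linear_combination b * hdetC⟩
  have fac : ∀ n m : ℤ, ‖n • a' + m • b'‖ = ‖a'‖ * ‖(n : ℂ) + m * t‖ := by
    intro n m
    rw [← norm_mul, eb]; congr 1; simp; ring
  refine ⟨a', b', ma, mb, ?_, ?_, ?_, ?_⟩
  · rw [LinearIndependent.pair_iff]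
    intro x y hxy
    have h0 : a' * ((x : ℂ) + y * t) = 0 := by
      rw [eb] at hxy; simp at hxy; linear_combination hxy
    have h3 := (mul_eq_zero.1 h0).resolve_left ha0
    have h4 := congrArg Complex.im h3
    have h5 := congrArg Complex.re h3
    simp [ht.ne'] at h4 h5
    simp [h4] at h5
    exact ⟨h5, h4⟩
  · apply le_antisymm
    · rw [AddSubgroup.closure_le]
      rintro x (rfl | rfl)
      exacts [ma, mb]
    · rw [AddSubgroup.closure_le]
      rintro x (rfl | rfl)
      exacts [ma', mb']
  · intro n m h
    rw [fac]
    exact le_mul_of_one_le_right (norm_nonneg _) ((geom_aux_ineq t h1 h2 n m).2 h)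
  · intro n m h
    rw [fac, eb, norm_mul]
    exact mul_le_mul_of_nonneg_left ((geom_aux_ineq t h1 h2 n m).1 h) (norm_nonneg _)

/-- A cocompact group of translations of ℂ generated by two ℝ-linearly independent
complex numbers admits a geometric basis. -/
theorem exists_geometric_basis (a b : ℂ) (hab : LinearIndependent ℝ ![a, b]) :
    ∃ a' b' : ℂ,
      a' ∈ AddSubgroup.closure ({a, b} : Set ℂ) ∧
      b' ∈ AddSubgroup.closure ({a, b} : Set ℂ) ∧
      LinearIndependent ℝ ![a', b'] ∧
      AddSubgroup.closure ({a', b'} : Set ℂ) = AddSubgroup.closure ({a, b} : Set ℂ) ∧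
      (∀ n m : ℤ, (n, m) ≠ (0, 0) →
        ‖a'‖ ≤ ‖n • a' + m • b'‖) ∧
      (∀ n m : ℤ, m ≠ 0 →
        ‖b'‖ ≤ ‖n • a' + m • b'‖) := by
  have ha : a ≠ 0 := by simpa using hab.ne_zero 0
  have hb : b ≠ 0 := by simpa using hab.ne_zero 1
  rcases lt_trichotomy (b / a).im 0 with h | h | h
  · rw [Set.pair_comm]
    apply geom_aux_main b a hb
    rw [← inv_div, Complex.inv_im]
    exact div_pos (by linarith) (Complex.normSq_pos.2 (div_ne_zero hb ha))
  · exfalso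
    rw [LinearIndependent.pair_iff] at hab
    have h0 : b / a = ((b / a).re : ℂ) := by
      apply Complex.ext <;> simp [h]
    have := (hab (b / a).re (-1) (by
      rw [Complex.real_smul, ← h0]; field_simp; simp)).2
    norm_num at this
  · exact geom_aux_main a b ha h
end

section
/- Let a, b ∈ ℂ be nonzero and let t ∈ ℤ. If |t·a + b| ≤ |(t+1)·a + b|, then either |(t−1)·a + b| < |t·a + b|, or |t·a + b| ≤ |n·a + b| for every integer n (i.e., t is a global integer minimizer of n ↦ |n·a + b|). -/
/-- For nonzero a, b ∈ ℂ and t ∈ ℤ: if |t·a + b| ≤ |(t+1)·a + b|, then either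
|(t−1)·a + b| < |t·a + b| or t is a global integer minimizer of n ↦ |n·a + b|. -/
theorem local_min_is_global_min (a b : ℂ) (ha : a ≠ 0) (hb : b ≠ 0) (t : ℤ)
    (h : ‖t • a + b‖ ≤ ‖(t + 1) • a + b‖) :
    ‖(t - 1) • a + b‖ < ‖t • a + b‖ ∨
    ∀ n : ℤ, ‖t • a + b‖ ≤ ‖n • a + b‖ := by
  by_cases h' : ‖(t - 1) • a + b‖ < ‖t • a + b‖
  · exact Or.inl h'
  right
  intro n
  rw [not_lt] at h'
  have key : ∀ m : ℤ, ‖m • a + b‖ ^ 2 = (m * a.re + b.re) ^ 2 + (m * a.im + b.im) ^ 2 := by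
    intro m
    rw [← Complex.normSq_eq_norm_sq, Complex.normSq_apply]
    simp
    ring
  have h1 := pow_le_pow_left₀ (norm_nonneg _) h 2
  have h2 := pow_le_pow_left₀ (norm_nonneg _) h' 2
  refine (sq_le_sq₀ (norm_nonneg _) (norm_nonneg _)).1 ?_
  rw [key, key] at h1 h2 ⊢
  obtain ⟨k, rfl⟩ : ∃ k, n = t + k := ⟨n - t, by ring⟩
  push_cast at *
  have hA : 0 ≤ a.re ^ 2 + a.im ^ 2 := by positivity
  rcases le_or_gt 0 k with hk | hk
  · have e1 : (0:ℝ) ≤ k := by exact_mod_cast hk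
    have e2 : (0:ℝ) ≤ k * (k - 1) := by
      have : 0 ≤ k * (k - 1) := by
        rcases hk.eq_or_lt with h0 | h0
        · simp [← h0]
        · exact mul_nonneg hk (by omega)
      exact_mod_cast this
    have := mul_le_mul_of_nonneg_left h1 e1
    have := mul_nonneg e2 hA
    linarith
  · have e1 : (0:ℝ) ≤ -k := by exact_mod_cast (by omega : 0 ≤ -k)
    have e2 : (0:ℝ) ≤ -k * (-k - 1) := by
      have : 0 ≤ -k * (-k - 1) := mul_nonneg (by omega) (by omega)
      exact_mod_cast this
    have := mul_le_mul_of_nonneg_left h2 e1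
    have := mul_nonneg e2 hA
    linarith
end

section
/- Let G₁ be a subgroup of (ℂ, +) generated over ℤ by two ℝ-linearly independent complex numbers, with geometric basis (a₁, b₁), and let G₂ be a subgroup of G₁ of index 2 with geometric basis (a₂, b₂). If |a₂| = 2 and |b₂| > 16, then |a₁| > 6 or |b₁| > 6. -/
/-- A geometric basis for a cocompact group of translations `G` of ℂ. -/
def IsGeometricBasis (G : AddSubgroup ℂ) (a b : ℂ) : Prop :=
  LinearIndependent ℝ ![a, b] ∧
  AddSubgroup.closure ({a, b} : Set ℂ) = G ∧
  (∀ n m : ℤ, (n, m) ≠ (0, 0) → ‖a‖ ≤ ‖n • a + m • b‖) ∧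
  (∀ n m : ℤ, m ≠ 0 → ‖b‖ ≤ ‖n • a + m • b‖)

theorem two_smul_mem_aux (G₁ G₂ : AddSubgroup ℂ) (hidx : G₂.relIndex G₁ = 2) (x : ℂ)
    (hx : x ∈ G₁) : x + x ∈ G₂ := by
  have h := AddSubgroup.add_self_mem_of_index_two (H := G₂.addSubgroupOf G₁) hidx ⟨x, hx⟩
  simpa [AddSubgroup.mem_addSubgroupOf] using h

theorem multiple_aux (G₂ : AddSubgroup ℂ) (a₂ b₂ x : ℂ) (h₂ : IsGeometricBasis G₂ a₂ b₂)
    (hb₂ : ‖b₂‖ > 16) (hx : x + x ∈ G₂) (hn : ‖x‖ ≤ 6) : ∃ n : ℤ, x + x = (n : ℝ) • a₂ := by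
  obtain ⟨-, hc, -, hb⟩ := h₂
  rw [← hc, AddSubgroup.mem_closure_pair] at hx
  obtain ⟨n, m, h⟩ := hx
  by_cases hm : m = 0
  · refine ⟨n, ?_⟩
    rw [← h, hm]
    simp
  · have h1 := hb n m hm
    rw [h] at h1
    have := norm_add_le x x
    linarith

theorem geometric_basis_length_bound (G₁ G₂ : AddSubgroup ℂ) (a₁ b₁ a₂ b₂ : ℂ)
    (h₁ : IsGeometricBasis G₁ a₁ b₁)
    (hle : G₂ ≤ G₁) (hidx : G₂.relIndex G₁ = 2)
    (h₂ : IsGeometricBasis G₂ a₂ b₂)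
    (ha₂ : ‖a₂‖ = 2) (hb₂ : ‖b₂‖ > 16) :
    ‖a₁‖ > 6 ∨ ‖b₁‖ > 6 := by
  by_contra! hcon
  obtain ⟨hA, hB⟩ := hcon
  obtain ⟨hli, hc, -, -⟩ := h₁
  have ha : a₁ ∈ G₁ := hc ▸ AddSubgroup.subset_closure (by simp)
  have hb : b₁ ∈ G₁ := hc ▸ AddSubgroup.subset_closure (by simp)
  obtain ⟨n, hn⟩ := multiple_aux G₂ a₂ b₂ a₁ h₂ hb₂ (two_smul_mem_aux G₁ G₂ hidx _ ha) hA
  obtain ⟨m, hm⟩ := multiple_aux G₂ a₂ b₂ b₁ h₂ hb₂ (two_smul_mem_aux G₁ G₂ hidx _ hb) hB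
  rw [LinearIndependent.pair_iff] at hli
  simp only [Complex.real_smul] at hli hn hm
  have h0 := hli (m : ℝ) (-(n : ℝ)) (by
    push_cast at *
    linear_combination (m : ℂ) / 2 * hn - (n : ℂ) / 2 * hm)
  have hm0 := h0.1
  rw [hm0] at hm
  have hb0 : b₁ = 0 := by
    push_cast at hm
    linear_combination hm / 2
  have := hli 0 1 (by simp [hb0])
  exact one_ne_zero this.2
end

section
/- Let θ ∈ ℝ with π/4 ≤ θ ≤ π/2, let r ∈ ℝ with r ≥ 1 and 2·r·sin θ ≤ 6, and let q ∈ ℤ with q ≥ 3. Then |r·e^{iθ} + 2q|² / (2·r·sin θ) ≥ 2(q−1)²/3; equivalently, (2·r·sin θ)/|r·e^{iθ} + 2q|² ≤ 3/(2(q−1)²). -/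
/-- The normalized length bound for the slope 1/q on a crossing circle cusp of the
octahedral FAL L₄: under the rigorously verified cusp-shape bounds, the normalized length
squared of the slope μ + 2q is at least 2(q−1)²/3. -/
theorem octahedral_cusp_slope_bound (θ r : ℝ) (q : ℤ)
    (hθ₁ : Real.pi / 4 ≤ θ) (hθ₂ : θ ≤ Real.pi / 2)
    (hr : 1 ≤ r) (hrs : 2 * r * Real.sin θ ≤ 6) (hq : 3 ≤ q) :
    ‖(r : ℂ) * Complex.exp ((θ : ℂ) * Complex.I) + 2 * (q : ℂ)‖ ^ 2
        / (2 * r * Real.sin θ) ≥ 2 * ((q : ℝ) - 1) ^ 2 / 3 ∧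
    (2 * r * Real.sin θ)
        / ‖(r : ℂ) * Complex.exp ((θ : ℂ) * Complex.I) + 2 * (q : ℂ)‖ ^ 2 ≤
      3 / (2 * ((q : ℝ) - 1) ^ 2) := by
  have hpi := Real.pi_pos
  have hs : 0 < Real.sin θ := Real.sin_pos_of_pos_of_lt_pi (by linarith) (by linarith)
  have hc : 0 ≤ Real.cos θ := Real.cos_nonneg_of_mem_Icc ⟨by linarith, by linarith⟩
  have hq' : (3 : ℝ) ≤ q := by exact_mod_cast hq
  have hN : ‖(r : ℂ) * Complex.exp ((θ : ℂ) * Complex.I) + 2 * (q : ℂ)‖ ^ 2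
      = (r * Real.cos θ + 2 * q) ^ 2 + (r * Real.sin θ) ^ 2 := by
    rw [Complex.sq_norm, Complex.normSq_apply]
    simp [Complex.exp_ofReal_mul_I_re, Complex.exp_ofReal_mul_I_im]
    ring
  rw [hN]
  have hrc : 0 ≤ r * Real.cos θ := by positivity
  have hS : 0 < 2 * r * Real.sin θ := by positivity
  have hB : 0 < 2 * ((q : ℝ) - 1) ^ 2 := by
    have : 0 < (q : ℝ) - 1 := by linarith
    positivity
  have hL : 4 * (q : ℝ) ^ 2 ≤ (r * Real.cos θ + 2 * q) ^ 2 + (r * Real.sin θ) ^ 2 := by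
    nlinarith [sq_nonneg (r * Real.sin θ), sq_nonneg (r * Real.cos θ),
      mul_nonneg hrc (by linarith : (0 : ℝ) ≤ q)]
  have key : 2 * ((q : ℝ) - 1) ^ 2 * (2 * r * Real.sin θ)
      ≤ 3 * ((r * Real.cos θ + 2 * q) ^ 2 + (r * Real.sin θ) ^ 2) := by
    have := mul_le_mul_of_nonneg_left hrs hB.le
    nlinarith
  have hNpos : 0 < (r * Real.cos θ + 2 * q) ^ 2 + (r * Real.sin θ) ^ 2 := by nlinarith
  constructor
  · rw [ge_iff_le, div_le_div_iff₀ (by norm_num) hS]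
    linarith
  · rw [div_le_div_iff₀ hNpos hB]
    linarith
end
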